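/- arXiv:2405.12771 — 2 statements merged into one kernel-verified Lean document; each statement's English description precedes it below -/
import Mathlib

section
/- Let L be a first-order language, n ∈ ℕ, and let M and N be L-structures. Then Th_{∀ₙ∃}(M) ⊆ Th_{∀ₙ∃}(N) if and only if: there exists an elementary extension N* of N such that for every n-tuple (b₁,…,bₙ) of elements of N* there exist an elementary extension M_b of M and an L-embedding f : M_b → N* such that b₁,…,bₙ all lie in the image of f. -/
open FirstOrder Language

universe u v w x

/-- Apply existential quantifiers to the last `s` bound variables of a bounded formula. -/
def FirstOrder.Language.BoundedFormula.exsN {L : FirstOrder.Language} {α : Type*} {m : ℕ} :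
    ∀ {s : ℕ}, L.BoundedFormula α (m + s) → L.BoundedFormula α m
  | 0, φ => φ
  | _ + 1, φ => φ.ex.exsN

/-- `Th_{∀ₙ∃}(M) ⊆ Th_{∀ₙ∃}(N)`: every sentence of the form `∀ x₁ … xₙ ∃ y₁ … yₛ ψ` with `ψ`
quantifier-free that holds in `M` also holds in `N`. -/
def AnETheorySub (L : FirstOrder.Language) (n : ℕ) (M : Type*) (N : Type*)
    [L.Structure M] [L.Structure N] : Prop :=
  ∀ (s : ℕ) (ψ : L.BoundedFormula Empty (n + s)), ψ.IsQF →
    M ⊨ (ψ.exsN.alls : L.Sentence) → N ⊨ (ψ.exsN.alls : L.Sentence)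

/-!
An existential formula with `n` free variables fails at some tuple of `M` if it fails at a tuple
`b` of `N`; this is `AnETheorySub` read contrapositively. As finite disjunctions of existential
formulas are existential, compactness gives an elementary extension `B` of `M` with a tuple `c`
whose existential type is contained in that of `b`. Hence every finite part of the quantifier-free
diagram of `B` over `c ↦ b` is realized in `N`, and by compactness some elementary extension of `N`
receives, for all `b` simultaneously, an embedding of the corresponding `B` with `c ↦ b`. This
handles the tuples from `N`; iterating `ω` times along an elementary chain handles the tuples from
the limit. The converse holds because embeddings preserve existential formulas.
-/

open FirstOrder.Language

section QuantifierFree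

variable {L : FirstOrder.Language} {ι α : Type*}

theorem isQF_iSup [Finite ι] {φ : ι → L.Formula α} (hφ : ∀ i, (φ i).IsQF) :
    (Formula.iSup φ).IsQF := by
  refine List.foldrRecOn (motive := BoundedFormula.IsQF) _ _ BoundedFormula.isQF_bot ?_
  intro ψ hψ χ hχ
  obtain ⟨i, -, rfl⟩ := List.mem_map.1 hχ
  exact (hφ i).sup hψ

theorem isQF_iInf [Finite ι] {φ : ι → L.Formula α} (hφ : ∀ i, (φ i).IsQF) :
    (Formula.iInf φ).IsQF := by
  refine List.foldrRecOn (motive := BoundedFormula.IsQF) _ _ BoundedFormula.IsQF.top ?_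
  intro ψ hψ χ hχ
  obtain ⟨i, -, rfl⟩ := List.mem_map.1 hχ
  exact (hφ i).inf hψ

theorem exists_embedding_of_realize_isQF {A B : Type*} [L.Structure A] [L.Structure B]
    {v : α → B} {w : α → A} (hv : v.Surjective)
    (h : ∀ φ : L.Formula α, φ.IsQF → φ.Realize v → φ.Realize w) :
    ∃ f : B ↪[L] A, f ∘ v = w := by
  have h_iff (φ : L.Formula α) (hφ : φ.IsQF) : φ.Realize w ↔ φ.Realize v :=
    ⟨fun hw => by_contra fun hnv => h φ.not hφ.not hnv hw, h φ hφ⟩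
  have h_eq (t₁ t₂ : L.Term α) : t₁.realize w = t₂.realize w ↔ t₁.realize v = t₂.realize v := by
    simpa only [Formula.realize_equal] using
      h_iff (t₁.equal t₂) (BoundedFormula.IsAtomic.equal _ _).isQF
  let g : B → A := w ∘ Function.surjInv hv
  have hgv : g ∘ v = w := funext fun a =>
    (h_eq (var _) (var a)).2 (Function.surjInv_eq hv (v a))
  have hg_inj : g.Injective := by
    refine hv.forall₂.2 fun a a' haa' => (h_eq (var a) (var a')).1 ?_
    rw [← hgv]
    exact haa'
  refine ⟨⟨⟨g, hg_inj⟩, fun {k} F x => ?_, fun {k} R x => ?_⟩, hgv⟩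
  · obtain ⟨y, rfl⟩ : ∃ y : Fin k → α, v ∘ y = x := hv.comp_left x
    obtain ⟨a, ha⟩ := hv (Structure.funMap F (v ∘ y))
    have h_term := (h_eq (var a) (Term.func F (var ∘ y))).2 ha
    simpa only [← hgv, Term.realize_var, Term.realize_func, Function.comp_def, ha] using h_term
  · obtain ⟨y, rfl⟩ : ∃ y : Fin k → α, v ∘ y = x := hv.comp_left x
    have h_rel := h_iff (R.formula (var ∘ y)) (BoundedFormula.IsAtomic.rel _ _).isQF
    simpa only [← hgv, Formula.realize_rel, Term.realize_var, Function.comp_def] using h_rel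

end QuantifierFree

section ExistentialQuantifiers

variable {L : FirstOrder.Language} {K : Type*} [L.Structure K]

theorem realize_exsN {α : Type*} {m : ℕ} (v : α → K) (xs : Fin m → K) :
    ∀ {s : ℕ} (φ : L.BoundedFormula α (m + s)),
      φ.exsN.Realize v xs ↔ ∃ ys : Fin s → K, φ.Realize v (Fin.append xs ys)
  | 0, φ => by
    rw [Fin.exists_fin_zero_pi, Fin.append_right_nil _ _ rfl]
    rfl
  | s + 1, φ => by
    simp only [BoundedFormula.exsN, realize_exsN v xs φ.ex, BoundedFormula.realize_ex,
      ← Fin.append_snoc]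
    exact ⟨fun ⟨ys, a, h⟩ => ⟨Fin.snoc ys a, h⟩,
      fun ⟨ys, h⟩ => ⟨Fin.init ys, ys (Fin.last s), by rwa [Fin.snoc_init_self]⟩⟩

theorem realize_alls_exsN_relabel {n s : ℕ} (φ : L.Formula (Fin n ⊕ Fin s)) :
    K ⊨ (BoundedFormula.exsN (m := n) (s := s)
      (BoundedFormula.relabel (Sum.inr ∘ finSumFinEquiv) φ)).alls (α := Empty) ↔
      ∀ a : Fin n → K, ∃ w : Fin s → K, φ.Realize (Sum.elim a w) := by
  refine BoundedFormula.realize_alls.trans (forall_congr' fun a => ?_)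
  refine (realize_exsN _ _ _).trans (exists_congr fun w => ?_)
  rw [← Fin.append_comp_sumElim]
  refine BoundedFormula.realize_relabel.trans ?_
  exact iff_of_eq (congrArg (BoundedFormula.Realize φ _) (Subsingleton.elim _ _))

theorem exists_fin_retraction {β : Type*} (S : Finset β) :
    ∃ (s : ℕ) (e : β → Fin s) (r : Fin s → β), ∀ x ∈ S, r (e x) = x := by
  rcases isEmpty_or_nonempty β with hβ | ⟨⟨x₀⟩⟩
  · exact ⟨0, isEmptyElim, Fin.elim0, isEmptyElim⟩
  · let r : Fin (S.card + 1) → β := Fin.cons x₀ fun i => S.equivFin.symm i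
    refine ⟨S.card + 1, r.invFun, r, fun x hx => Function.invFun_eq ⟨(S.equivFin ⟨x, hx⟩).succ, ?_⟩⟩
    simp [r]

theorem realize_congr_freeVarFinset {α : Type*} [DecidableEq α] {φ : L.Formula α} {v v' : α → K}
    (h : ∀ x ∈ φ.freeVarFinset, v x = v' x) : φ.Realize v ↔ φ.Realize v' :=
  (BoundedFormula.realize_restrictFreeVar (f := Subtype.val) v fun _ => rfl).symm.trans
    (BoundedFormula.realize_restrictFreeVar v' fun x => h x x.2)

theorem exists_realize_relabel_iff {ι β γ : Type*} [DecidableEq (ι ⊕ β)]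
    {φ : L.Formula (ι ⊕ β)} {e : β → γ} {r : γ → β}
    (hr : ∀ x ∈ φ.freeVarFinset.toRight, r (e x) = x) (a : ι → K) :
    (∃ w : γ → K, (φ.relabel (Sum.map id e)).Realize (Sum.elim a w)) ↔
      ∃ w : β → K, φ.Realize (Sum.elim a w) := by
  simp only [Formula.realize_relabel, Sum.elim_comp_map, Function.comp_id]
  refine ⟨fun ⟨w, hw⟩ => ⟨w ∘ e, hw⟩, fun ⟨w, hw⟩ => ⟨w ∘ r, ?_⟩⟩
  refine (realize_congr_freeVarFinset ?_).1 hw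
  rintro (i | x) hx
  · rfl
  · simp [hr x (Finset.mem_toRight.2 hx)]

theorem realize_iSup_relabel_sigma {ι κ : Type*} [Finite κ] {β : κ → Type*}
    (φ : ∀ k, L.Formula (ι ⊕ β k)) (a : ι → K) (w : (Σ k, β k) → K) :
    (Formula.iSup fun k => (φ k).relabel (Sum.map id (Sigma.mk k))).Realize (Sum.elim a w) ↔
      ∃ k, (φ k).Realize (Sum.elim a (w ∘ Sigma.mk k)) := by
  simp only [Formula.realize_iSup, Formula.realize_relabel, Sum.elim_comp_map, Function.comp_id]

end ExistentialQuantifiers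

namespace AnETheorySub

variable {L : FirstOrder.Language} {n : ℕ} {M N : Type*} [L.Structure M] [L.Structure N]

theorem exists_realize (h : AnETheorySub L n M N) {β : Type*} {φ : L.Formula (Fin n ⊕ β)}
    (hφ : φ.IsQF) (hM : ∀ a : Fin n → M, ∃ w : β → M, φ.Realize (Sum.elim a w))
    (b : Fin n → N) : ∃ w : β → N, φ.Realize (Sum.elim b w) := by
  classical
  obtain ⟨s, e, r, hr⟩ := exists_fin_retraction φ.freeVarFinset.toRight
  simp only [← exists_realize_relabel_iff hr] at hM ⊢
  exact realize_alls_exsN_relabel _ |>.1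
    (h s _ ((hφ.relabel _).relabel _) ((realize_alls_exsN_relabel _).2 hM)) b

theorem exists_forall_not (h : AnETheorySub L n M N) {κ : Type*} [Finite κ] {β : κ → Type*}
    {φ : ∀ k, L.Formula (Fin n ⊕ β k)} (hφ : ∀ k, (φ k).IsQF) {b : Fin n → N}
    (hb : ∀ k, ¬∃ w, (φ k).Realize (Sum.elim b w)) :
    ∃ a : Fin n → M, ∀ k, ¬∃ w, (φ k).Realize (Sum.elim a w) := by
  -- To realize the disjunction of the `φ k`, the variables outside one true disjunct need some
  -- value in `M`, namely the entry `a i`. If `n = 0`, `M` may be empty, but then there is only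
  -- one tuple.
  rcases isEmpty_or_nonempty (Fin n) with hn | ⟨⟨i⟩⟩
  · refine ⟨isEmptyElim, fun k hk => hb k (h.exists_realize (hφ k) (fun a => ?_) b)⟩
    rwa [Subsingleton.elim a isEmptyElim]
  · by_contra! hM
    obtain ⟨w, hw⟩ := h.exists_realize (β := Σ k, β k)
      (isQF_iSup (φ := fun k => (φ k).relabel (Sum.map id (Sigma.mk k)))
        fun k => (hφ k).relabel _)
      (fun a => by
        obtain ⟨k, w, hw⟩ := hM a
        refine ⟨Function.extend (Sigma.mk k) w fun _ => a i,
          (realize_iSup_relabel_sigma φ a _).2 ⟨k, ?_⟩⟩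
        rwa [Function.extend_comp sigma_mk_injective]) b
    obtain ⟨k, hk⟩ := (realize_iSup_relabel_sigma φ b w).1 hw
    exact hb k ⟨_, hk⟩

theorem comp_elementaryEmbedding_right (h : AnETheorySub L n M N) {N' : Type*} [L.Structure N']
    (j : N ↪ₑ[L] N') : AnETheorySub L n M N' :=
  fun s ψ hψ hM => (j.map_sentence _).1 (h s ψ hψ hM)

theorem comp_elementaryEmbedding_left (h : AnETheorySub L n M N) {M' : Type*} [L.Structure M']
    (j : M ↪ₑ[L] M') : AnETheorySub L n M' N :=
  fun s ψ hψ hM => h s ψ hψ ((j.map_sentence _).2 hM)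

end AnETheorySub

/-- Every existential formula true of the tuple `c` is true of the tuple `b`. The quantified
variables are the free variables in the right summand, so that no formula with a quantifier
has to be written down. -/
def ExistentialTypeSub (L : FirstOrder.Language) {ι B A : Type*} [L.Structure B] [L.Structure A]
    (c : ι → B) (b : ι → A) : Prop :=
  ∀ (s : ℕ) (φ : L.Formula (ι ⊕ Fin s)), φ.IsQF →
    (∃ w : Fin s → B, φ.Realize (Sum.elim c w)) → ∃ w : Fin s → A, φ.Realize (Sum.elim b w)

namespace ExistentialTypeSub

variable {L : FirstOrder.Language} {ι A B : Type*} [L.Structure A] [L.Structure B]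
  {c : ι → B} {b : ι → A}

theorem exists_realize (h : ExistentialTypeSub L c b) {β : Type*} {φ : L.Formula (ι ⊕ β)}
    (hφ : φ.IsQF) (hc : ∃ w : β → B, φ.Realize (Sum.elim c w)) :
    ∃ w : β → A, φ.Realize (Sum.elim b w) := by
  classical
  obtain ⟨s, e, r, hr⟩ := exists_fin_retraction φ.freeVarFinset.toRight
  rw [← exists_realize_relabel_iff hr] at hc ⊢
  exact h s _ (hφ.relabel _) hc

theorem exists_forall_realize (h : ExistentialTypeSub L c b) {β κ : Type*} [Finite κ]
    {φ : κ → L.Formula (ι ⊕ β)} (hφ : ∀ k, (φ k).IsQF)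
    (hc : ∃ w : β → B, ∀ k, (φ k).Realize (Sum.elim c w)) :
    ∃ w : β → A, ∀ k, (φ k).Realize (Sum.elim b w) := by
  simpa only [Formula.realize_iInf] using
    h.exists_realize (isQF_iInf hφ) (by simpa only [Formula.realize_iInf] using hc)

end ExistentialTypeSub

section Compactness

theorem exists_realize_of_finitely_realizable {L : FirstOrder.Language.{u, v}} {α : Type w}
    {κ : Type*} (Φ : κ → L.Formula α)
    (h : ∀ s : Finset κ, ∃ (A : Type x) (_ : L.Structure A) (_ : Nonempty A) (a : α → A),
      ∀ k ∈ s, (Φ k).Realize a) :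
    ∃ (A : Type (max u v w)) (_ : L.Structure A) (a : α → A), ∀ k, (Φ k).Realize a := by
  classical
  have h_sat : Theory.IsSatisfiable (Set.range fun k => Formula.equivSentence (Φ k)) := by
    rw [Theory.isSatisfiable_iff_isFinitelySatisfiable]
    intro T hT
    rw [← Set.image_univ] at hT
    obtain ⟨s, -, rfl⟩ := Finset.subset_set_image_iff.1 hT
    obtain ⟨A, _, _, a, ha⟩ := h s
    let : (constantsOn α).Structure A := constantsOn.structure a
    have : A ⊨ (↑(s.image fun k => Formula.equivSentence (Φ k)) : L[[α]].Theory) := by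
      refine ⟨fun σ hσ => ?_⟩
      obtain ⟨k, hk, rfl⟩ := Finset.mem_image.1 hσ
      rw [← Formula.realize_equivSentence_symm A _ a, Equiv.symm_apply_apply]
      exact ha k hk
    exact Theory.Model.isSatisfiable A
  obtain ⟨B⟩ := h_sat
  let := (L.lhomWithConstants α).reduct B
  refine ⟨B, inferInstance, fun a => (L.con a : B), fun k => ?_⟩
  rw [← Formula.realize_equivSentence]
  exact B.is_model.realize_of_mem _ ⟨k, rfl⟩

theorem exists_elementaryEmbedding_of_realize {L : FirstOrder.Language} {M N : Type*}
    [L.Structure M] [L.Structure N] (f : M → N)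
    (hf : ∀ φ : L.Formula M, φ.Realize id → φ.Realize f) : ∃ j : M ↪ₑ[L] N, ⇑j = f := by
  have h_iff (φ : L.Formula M) : φ.Realize f ↔ φ.Realize id :=
    ⟨fun h => by_contra fun hid => hf φ.not hid h, hf φ⟩
  exact ⟨⟨f, fun n φ x => by
    simpa only [Formula.realize_relabel, Function.id_comp] using h_iff (φ.relabel x)⟩, rfl⟩

theorem exists_elementaryExtension_realize {L : FirstOrder.Language.{u, v}}
    {A : Type (max u v w x)} {β : Type x} [L.Structure A] {κ : Type*} (Φ : κ → L.Formula (A ⊕ β))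
    (h : ∀ s : Finset κ, ∃ a : β → A, ∀ k ∈ s, (Φ k).Realize (Sum.elim id a)) :
    ∃ (A' : Type (max u v w x)) (_ : L.Structure A') (j : A ↪ₑ[L] A') (a : β → A'),
      ∀ k, (Φ k).Realize (Sum.elim j a) := by
  -- `Theory.IsSatisfiable` asks for a nonempty model, so compactness says nothing if `A` is empty.
  rcases isEmpty_or_nonempty A with hA | hA
  · obtain ⟨a₀, -⟩ := h ∅
    refine ⟨A, inferInstance, ElementaryEmbedding.refl L A, a₀, fun k => ?_⟩
    obtain ⟨a, ha⟩ := h {k}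
    rw [Subsingleton.elim a₀ a]
    exact ha k (Finset.mem_singleton_self k)
  · let Ψ : {φ : L.Formula A // φ.Realize id} ⊕ κ → L.Formula (A ⊕ β) :=
      Sum.elim (fun φ => φ.1.relabel Sum.inl) Φ
    obtain ⟨A', _, v, hv⟩ := exists_realize_of_finitely_realizable.{u, v, max u v w x} Ψ fun s => by
      obtain ⟨a, ha⟩ := h s.toRight
      refine ⟨A, inferInstance, hA, Sum.elim id a, ?_⟩
      rintro (φ | k) hk
      · exact Formula.realize_relabel.2 φ.2
      · exact ha k (Finset.mem_toRight.2 hk)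
    obtain ⟨j, hj⟩ := exists_elementaryEmbedding_of_realize (v ∘ Sum.inl) fun φ hφ =>
      Formula.realize_relabel.1 (hv (Sum.inl ⟨φ, hφ⟩))
    refine ⟨A', inferInstance, j, v ∘ Sum.inr, fun k => ?_⟩
    rw [hj, Sum.elim_comp_inl_inr]
    exact hv (Sum.inr k)

end Compactness

section Amalgamation

variable {L : FirstOrder.Language.{u, v}}

theorem AnETheorySub.exists_elementaryExtension_existentialTypeSub {M : Type (max u v w)}
    [L.Structure M] {A : Type*} [L.Structure A] {n : ℕ} (h : AnETheorySub L n M A)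
    (b : Fin n → A) :
    ∃ (B : Type (max u v w)) (_ : L.Structure B) (_ : M ↪ₑ[L] B) (c : Fin n → B),
      ExistentialTypeSub L c b := by
  let κ := {p : Σ s, L.Formula (Fin n ⊕ Fin s) //
    p.2.IsQF ∧ ¬∃ w, p.2.Realize (Sum.elim b w)}
  let Φ : κ → L.Formula (M ⊕ Fin n) := fun p => (p.1.2.iExs (Fin p.1.1)).not.relabel Sum.inr
  have hΦ {K : Type (max u v w)} [L.Structure K] (v : M → K) (c : Fin n → K) (p : κ) :
      (Φ p).Realize (Sum.elim v c) ↔ ¬∃ w, p.1.2.Realize (Sum.elim c w) := by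
    simp only [Φ, Formula.realize_relabel, Formula.realize_not, Formula.realize_iExs,
      Sum.elim_comp_inr]
  obtain ⟨B, _, j, c, hc⟩ := exists_elementaryExtension_realize.{u, v, w, 0} Φ fun s => by
    obtain ⟨a, ha⟩ := h.exists_forall_not (κ := s) (φ := fun p => p.1.1.2)
      (fun p => p.1.2.1) (fun p => p.1.2.2)
    exact ⟨a, fun p hp => (hΦ id a p).2 (ha ⟨p, hp⟩)⟩
  exact ⟨B, inferInstance, j, c, fun s φ hφ hcφ =>
    by_contra fun hb => (hΦ j c ⟨⟨s, φ⟩, hφ, hb⟩).1 (hc _) hcφ⟩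

theorem exists_elementaryExtension_forall_embedding {A : Type (max u v w)} [L.Structure A]
    {I : Type (max u v w)} {B : I → Type (max u v w)} [∀ i, L.Structure (B i)] {ι : Type*}
    {c : ∀ i, ι → B i} {b : I → ι → A} (h : ∀ i, ExistentialTypeSub L (c i) (b i)) :
    ∃ (A' : Type (max u v w)) (_ : L.Structure A') (j : A ↪ₑ[L] A'),
      ∀ i, ∃ f : B i ↪[L] A', f ∘ c i = j ∘ b i := by
  let D (i : I) := {φ : L.Formula (ι ⊕ B i) // φ.IsQF ∧ φ.Realize (Sum.elim (c i) id)}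
  let Φ : (Σ i, D i) → L.Formula (A ⊕ Σ i, B i) := fun p =>
    p.2.1.relabel (Sum.elim (Sum.inl ∘ b p.1) (Sum.inr ∘ Sigma.mk p.1))
  have hΦ {K : Type (max u v w)} [L.Structure K] (v : A → K) (w : (Σ i, B i) → K) (p : Σ i, D i) :
      (Φ p).Realize (Sum.elim v w) ↔ p.2.1.Realize (Sum.elim (v ∘ b p.1) (w ∘ Sigma.mk p.1)) := by
    simp only [Φ, Formula.realize_relabel, Sum.comp_elim, ← Function.comp_assoc,
      Sum.elim_comp_inl, Sum.elim_comp_inr]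
  obtain ⟨A', _, j, w, hw⟩ := exists_elementaryExtension_realize.{u, v, w, max u v w} Φ fun s => by
    have h_fin (i : I) : ∃ w : B i → A, ∀ φ : {φ : D i // ⟨i, φ⟩ ∈ s},
        φ.1.1.Realize (Sum.elim (b i) w) := by
      have : Finite {φ : D i // ⟨i, φ⟩ ∈ s} :=
        (s.finite_toSet.preimage sigma_mk_injective.injOn).to_subtype
      exact (h i).exists_forall_realize (fun φ => φ.1.2.1) ⟨id, fun φ => φ.1.2.2⟩
    choose w hw using h_fin
    exact ⟨fun x => w x.1 x.2, fun p hp => (hΦ _ _ p).2 (hw p.1 ⟨p.2, hp⟩)⟩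
  refine ⟨A', inferInstance, j, fun i => ?_⟩
  obtain ⟨f, hf⟩ := exists_embedding_of_realize_isQF (v := Sum.elim (c i) id)
    (w := Sum.elim (j ∘ b i) (w ∘ Sigma.mk i)) (fun x => ⟨Sum.inr x, rfl⟩)
    fun φ hφ hc => (hΦ j w ⟨i, φ, hφ, hc⟩).1 (hw _)
  exact ⟨f, funext fun k => congrFun hf (Sum.inl k)⟩

end Amalgamation

section ElementaryChains

variable {L : FirstOrder.Language}

theorem realize_directLimit_of {I : Type*} [Preorder I] [IsDirectedOrder I] [Nonempty I]
    {G : I → Type*} [∀ i, L.Structure (G i)] {f : ∀ i j, i ≤ j → G i ↪[L] G j}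
    [DirectedSystem G fun i j h => f i j h] (hf : ∀ i j h, ∃ g : G i ↪ₑ[L] G j, ⇑g = f i j h)
    {α : Type*} {m : ℕ} (φ : L.BoundedFormula α m) {i : I} (v : α → G i) (xs : Fin m → G i) :
    φ.Realize (DirectLimit.of L I G f i ∘ v) (DirectLimit.of L I G f i ∘ xs) ↔ φ.Realize v xs := by
  induction φ generalizing i with
  | falsum => rfl
  | equal t₁ t₂ => exact (BoundedFormula.IsAtomic.equal t₁ t₂).isQF.realize_embedding _
  | rel R ts => exact (BoundedFormula.IsAtomic.rel R ts).isQF.realize_embedding _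
  | imp _ _ ih₁ ih₂ => exact imp_congr (ih₁ v xs) (ih₂ v xs)
  | @all m φ ih =>
    refine ⟨fun h x => (ih v _).1 ?_, fun h z => ?_⟩
    · rw [Fin.comp_snoc]
      exact h _
    · obtain ⟨j, x, rfl⟩ := DirectLimit.exists_of z
      obtain ⟨k, hik, hjk⟩ := directed_of (· ≤ ·) i j
      obtain ⟨g, hg⟩ := hf i k hik
      have h_of : ⇑(DirectLimit.of L I G f i) = DirectLimit.of L I G f k ∘ g :=
        funext fun y => by rw [Function.comp_apply, hg, DirectLimit.of_f]
      rw [← DirectLimit.of_f (f := f) (hij := hjk), h_of, Function.comp_assoc,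
        Function.comp_assoc, ← Fin.comp_snoc, ih]
      exact (g.map_boundedFormula φ.all v xs).2 h _

theorem exists_elementaryEmbedding_natLERec {G : ℕ → Type*} [∀ k, L.Structure (G k)]
    (j : ∀ k, G k ↪ₑ[L] G (k + 1)) (k l : ℕ) (h : k ≤ l) :
    ∃ g : G k ↪ₑ[L] G l, ⇑g = DirectedSystem.natLERec (fun k => (j k).toEmbedding) k l h := by
  rw [DirectedSystem.coe_natLERec]
  induction l, h using Nat.le_induction with
  | base => exact ⟨ElementaryEmbedding.refl L _, funext fun x => (Nat.leRecOn_self x).symm⟩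
  | succ l h ih =>
    obtain ⟨g, hg⟩ := ih
    refine ⟨(j l).comp g, funext fun x => ?_⟩
    exact (congrArg (j l) (congrFun hg x)).trans (Nat.leRecOn_succ h x).symm

theorem exists_elementary_limit {G : ℕ → Type w} [∀ k, L.Structure (G k)]
    (j : ∀ k, G k ↪ₑ[L] G (k + 1)) :
    ∃ (A : Type w) (_ : L.Structure A) (o : ∀ k, G k ↪ₑ[L] A),
      (∀ k, ⇑(o (k + 1)) ∘ j k = o k) ∧
        ∀ {m : ℕ} (x : Fin m → A), ∃ (k : ℕ) (y : Fin m → G k), x = o k ∘ y := by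
  let f := DirectedSystem.natLERec fun k => (j k).toEmbedding
  have hf := exists_elementaryEmbedding_natLERec j
  let o (k : ℕ) : G k ↪ₑ[L] Language.DirectLimit G f :=
    ⟨DirectLimit.of L ℕ G f k, fun m φ x => by
      simpa only [Formula.Realize, Subsingleton.elim (_ ∘ _) (default : Fin 0 → _)] using
        realize_directLimit_of hf φ x default⟩
  refine ⟨Language.DirectLimit G f, inferInstance, o, fun k => funext fun x => ?_, fun {m} x => ?_⟩
  · have h_succ : f k (k + 1) (Nat.le_succ k) x = j k x := by
      rw [DirectedSystem.coe_natLERec]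
      exact Nat.leRecOn_succ' x
    calc o (k + 1) (j k x) = o (k + 1) (f k (k + 1) (Nat.le_succ k) x) := by rw [h_succ]
      _ = o k x := DirectLimit.of_f
  · exact DirectLimit.exists_quotient_mk'_sigma_mk'_eq G f x

end ElementaryChains

/-- The elementary extension condition of the theorem, relative to a map `j : A → A'`: the image
under `j` of each `n`-tuple of `A` is contained in the image of an `L`-embedding into `A'` of
an elementary extension of `M`. The case `j = id` is the condition of the theorem; the general
case describes two consecutive members of an elementary chain. -/
def TuplesLieOver (L : FirstOrder.Language) (M : Type*) [L.Structure M] (n : ℕ)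
    {A : Type*} {A' : Type w} [L.Structure A'] (j : A → A') : Prop :=
  ∀ b : Fin n → A, ∃ (B : Type w) (_ : L.Structure B) (_ : M ↪ₑ[L] B) (f : B ↪[L] A'),
    ∀ i, j (b i) ∈ Set.range f

section ForallExists

variable {L : FirstOrder.Language.{u, v}} {n : ℕ}

theorem anETheorySub_of_tuplesLieOver {M A : Type*} [L.Structure M] [L.Structure A]
    {A' : Type*} [L.Structure A'] (j : A ↪ₑ[L] A') (h : TuplesLieOver L M n j) :
    AnETheorySub L n M A := by
  intro s ψ hψ hM
  refine BoundedFormula.realize_alls.2 fun b => ?_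
  obtain ⟨B, _, g, f, hf⟩ := h b
  choose c hc using hf
  obtain ⟨w, hw⟩ := (realize_exsN _ _ _).1
    (BoundedFormula.realize_alls.1 ((g.map_sentence _).1 hM) c)
  have h_append : f ∘ Fin.append c w = Fin.append (j ∘ b) (f ∘ w) := by
    refine funext fun i => i.addCases (fun i => ?_) fun i => ?_
    · simp only [Function.comp_apply, Fin.append_left, hc]
    · simp only [Function.comp_apply, Fin.append_right]
  rw [← j.map_boundedFormula, realize_exsN]
  refine ⟨f ∘ w, ?_⟩
  rw [← h_append, Subsingleton.elim (j ∘ default) (f ∘ default)]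
  exact (hψ.realize_embedding f).2 hw

theorem AnETheorySub.exists_elementaryExtension_tuplesLieOver {M A : Type (max u v w)}
    [L.Structure M] [L.Structure A] (h : AnETheorySub L n M A) :
    ∃ (A' : Type (max u v w)) (_ : L.Structure A') (j : A ↪ₑ[L] A'), TuplesLieOver L M n j := by
  choose B sB g c hcb using fun b : Fin n → A =>
    h.exists_elementaryExtension_existentialTypeSub.{u, v, w} b
  obtain ⟨A', _, j, hj⟩ := exists_elementaryExtension_forall_embedding.{u, v, w} hcb
  refine ⟨A', inferInstance, j, fun b => ?_⟩
  obtain ⟨f, hf⟩ := hj b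
  exact ⟨B b, inferInstance, g b, f, fun i => ⟨c b i, congrFun hf i⟩⟩

theorem AnETheorySub.exists_elementaryExtension_tuplesLieOver_id {M A : Type (max u v w)}
    [L.Structure M] [L.Structure A] (h : AnETheorySub L n M A) :
    ∃ (A' : Type (max u v w)) (_ : L.Structure A') (_ : A ↪ₑ[L] A'),
      TuplesLieOver L M n (id : A' → A') := by
  let Stage := {S : CategoryTheory.Bundled.{max u v w} L.Structure // AnETheorySub L n M S}
  have h_next (S : Stage) : ∃ (S' : Stage) (j : S.1 ↪ₑ[L] S'.1), TuplesLieOver L M n j := by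
    obtain ⟨A', _, j, hj⟩ := S.2.exists_elementaryExtension_tuplesLieOver.{u, v, w}
    exact ⟨⟨CategoryTheory.Bundled.of A', S.2.comp_elementaryEmbedding_right j⟩, j, hj⟩
  choose next j hj using h_next
  let S (k : ℕ) : Stage := k.rec ⟨CategoryTheory.Bundled.of A, h⟩ fun _ => next
  let G (k : ℕ) : Type (max u v w) := (S k).1
  obtain ⟨A', _, o, ho, h_range⟩ := exists_elementary_limit (L := L) (G := G) fun k => j (S k)
  refine ⟨A', inferInstance, o 0, fun b => ?_⟩
  obtain ⟨k, y, rfl⟩ := h_range b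
  obtain ⟨B, _, g, f, hf⟩ := hj (S k) y
  refine ⟨B, inferInstance, g, (o (k + 1)).toEmbedding.comp f, fun i => ?_⟩
  obtain ⟨x, hx⟩ := hf i
  exact ⟨x, (congrArg (o (k + 1)) hx).trans (congrFun (ho k) (y i))⟩

end ForallExists

theorem exists_elementaryEmbedding_ulift {L : FirstOrder.Language} (M : Type w) [L.Structure M] :
    ∃ _ : L.Structure (ULift.{x} M), Nonempty (M ↪ₑ[L] ULift.{x} M) :=
  let e : M ≃ ULift.{x} M := Equiv.ulift.symm
  let _ : L.Structure (ULift.{x} M) := e.inducedStructure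
  ⟨inferInstance, ⟨(e.inducedStructureEquiv (L := L)).toElementaryEmbedding⟩⟩

/-- `Th_{∀ₙ∃}(M) ⊆ Th_{∀ₙ∃}(N)` iff there is an elementary extension `N*` of `N`
such that for every `n`-tuple `b` from `N*` there are an elementary extension `M_b ≽ M` and an
embedding `f : M_b ↪ N*` whose image contains `b₁, …, bₙ`. -/
theorem stmt2 {L : FirstOrder.Language.{u, v}} {M : Type w} {N : Type x}
    [L.Structure M] [L.Structure N] (n : ℕ) :
    AnETheorySub L n M N ↔
      ∃ (N' : Type (max u v w x)) (_ : L.Structure N') (_ : N ↪ₑ[L] N'),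
        ∀ b : Fin n → N',
          ∃ (Mb : Type (max u v w x)) (_ : L.Structure Mb) (_ : M ↪ₑ[L] Mb)
            (f : Mb ↪[L] N'), ∀ i, b i ∈ Set.range f := by
  refine ⟨fun h => ?_, fun ⟨N', _, j, hN'⟩ => anETheorySub_of_tuplesLieOver j fun b => hN' (j ∘ b)⟩
  obtain ⟨_, ⟨jM⟩⟩ := exists_elementaryEmbedding_ulift.{w, max u v x} (L := L) M
  obtain ⟨_, ⟨jN⟩⟩ := exists_elementaryEmbedding_ulift.{x, max u v w} (L := L) N
  have h' := (h.comp_elementaryEmbedding_left jM).comp_elementaryEmbedding_right jN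
  obtain ⟨N', _, j, hN'⟩ := h'.exists_elementaryExtension_tuplesLieOver_id.{u, v, max w x}
  refine ⟨N', inferInstance, j.comp jN, fun b => ?_⟩
  obtain ⟨B, _, g, f, hf⟩ := hN' b
  exact ⟨B, inferInstance, g.comp jM, f, hf⟩
end

section
/- Let k₀ be a field and let k and l be field extensions of k₀. Suppose that every existential sentence with parameters from k₀ true in k is true in l; that is, for every existential ring formula φ(v₁,…,v_m) and all c₁,…,c_m ∈ k₀: if k ⊨ φ(c₁,…,c_m) then l ⊨ φ(c₁,…,c_m) (parameters taken via the inclusions k₀ ⊆ k and k₀ ⊆ l). Then for every existential ring formula φ(v₁,…,v_m) and all parameters r₁,…,r_m from the rational function field k₀(t): if k(t) ⊨ φ(r₁,…,r_m) then l(t) ⊨ φ(r₁,…,r_m), where k₀(t) is mapped into k(t) and l(t) by the field embeddings induced by k₀ ⊆ k and k₀ ⊆ l sending t to t. In particular, if every existential ring sentence true in k is true in l, then for every existential ring formula φ(w): k(t) ⊨ φ(t) implies l(t) ⊨ φ(t). -/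
open FirstOrder Language

attribute [local instance] FirstOrder.Ring.compatibleRingOfRing

/-!
Existential formulas with parameters transfer from a ring `R` to a ring `S` exactly when `R` embeds
into an ultrapower of `S` compatibly with the parameters. Given an embedding of `R` into the
ultrapower `S*`, the chain `R(t) → S*(t) → S(t)*` embeds `R(t)` into the ultrapower of `S(t)`,
because the constant germ `t` is transcendental over `S*`. The composite sends `t` to `t` and is
compatible with the parameters, so existential formulas transfer from `R(t)` to `S(t)`.
-/

open Filter

section Language

variable {L : Language} {α M N : Type*} [L.Structure M] [L.Structure N]

theorem isQF_restrictFreeVar [DecidableEq α] {β : Type*} {n : ℕ} {φ : L.BoundedFormula α n}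
    (hφ : φ.IsQF) (f : φ.freeVarFinset → β) : (φ.restrictFreeVar f).IsQF := by
  induction hφ with
  | falsum => exact .falsum
  | of_isAtomic hφ =>
    cases hφ with
    | equal => exact (BoundedFormula.IsAtomic.equal _ _).isQF
    | rel => exact (BoundedFormula.IsAtomic.rel _ _).isQF
  | imp _ _ ih₁ ih₂ => exact (ih₁ _).imp (ih₂ _)

theorem realize_exs_comp_embedding (f : M ↪[L] N) {v : α → M} {s : ℕ}
    {φ : L.BoundedFormula α s} (hφ : φ.IsQF) (hv : φ.exs.Realize v) :
    φ.exs.Realize (f ∘ v) := by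
  rw [BoundedFormula.realize_exs] at hv ⊢
  obtain ⟨x, hx⟩ := hv
  exact ⟨f ∘ x, (hφ.realize_embedding f).2 hx⟩

/-- The existential type of the tuple `v` in `M` is contained in that of the tuple `w` in `N`. The
tuples interpret the parameters of existential sentences and may be infinite; existential formulas
are written in the prenex form `φ.exs` with `φ` quantifier-free. -/
def ExistentialTransfer (L : Language) {α M N : Type*} [L.Structure M] [L.Structure N]
    (v : α → M) (w : α → N) : Prop :=
  ∀ (s : ℕ) (φ : L.BoundedFormula α s), φ.IsQF → φ.exs.Realize v → φ.exs.Realize w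

namespace ExistentialTransfer

variable {v : α → M} {w : α → N}

theorem of_fin (h : ∀ (m : ℕ) (c : Fin m → α), ExistentialTransfer L (v ∘ c) (w ∘ c)) :
    ExistentialTransfer L v w := by
  classical
  intro s φ hφ hv
  let e := φ.freeVarFinset.equivFin
  have h_restrict := h _ (Subtype.val ∘ e.symm) s _ (isQF_restrictFreeVar hφ e)
  simp only [BoundedFormula.realize_exs] at h_restrict hv ⊢
  obtain ⟨x, hx⟩ := hv
  obtain ⟨y, hy⟩ := h_restrict ⟨x, (BoundedFormula.realize_restrictFreeVar v (by simp)).2 hx⟩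
  exact ⟨y, (BoundedFormula.realize_restrictFreeVar w (by simp)).1 hy⟩

theorem realize_iExs {β : Type*} [Finite β] {φ : L.Formula (α ⊕ β)}
    (h : ExistentialTransfer L v w) (hφ : φ.IsQF) (hv : (φ.iExs β).Realize v) :
    (φ.iExs β).Realize w :=
  h _ _ (hφ.relabel _) hv

theorem exists_realize [Nonempty N] (h : ExistentialTransfer L v w) {φ : L.Formula (α ⊕ M)}
    (hφ : φ.IsQF) (hv : φ.Realize (Sum.elim v id)) :
    ∃ z : M → N, φ.Realize (Sum.elim w z) := by
  classical
  let T := φ.freeVarFinset.toRight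
  let f : φ.freeVarFinset → α ⊕ T
    | ⟨.inl a, _⟩ => .inl a
    | ⟨.inr m, hm⟩ => .inr ⟨m, Finset.mem_toRight.2 hm⟩
  have hM : (Formula.iExs T (φ.restrictFreeVar f)).Realize v :=
    Formula.realize_iExs.2 ⟨Subtype.val,
      (BoundedFormula.realize_restrictFreeVar (Sum.elim v id) (by rintro ⟨_ | _, _⟩ <;> rfl)).2 hv⟩
  obtain ⟨z, hz⟩ := Formula.realize_iExs.1 (h.realize_iExs (isQF_restrictFreeVar hφ f) hM)
  let z' : M → N := Function.extend Subtype.val z fun _ ↦ Classical.arbitrary N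
  have z'_apply (m : T) : z' m = z m := Subtype.val_injective.extend_apply _ _ m
  refine ⟨z', (BoundedFormula.realize_restrictFreeVar _ ?_).1 hz⟩
  rintro ⟨_ | m, hm⟩
  · rfl
  · exact (z'_apply ⟨m, Finset.mem_toRight.2 hm⟩).symm

/-- The ultrapower is indexed by the maps `z : M → N` themselves, so that `m ↦ [z ↦ z m]` embeds `M`
into it. -/
theorem exists_ultrafilter [Nonempty N] (h : ExistentialTransfer L v w) :
    ∃ U : Ultrafilter (M → N), ∀ φ : L.Formula (α ⊕ M), φ.IsQF → φ.Realize (Sum.elim v id) →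
      ∀ᶠ z in U, φ.Realize (Sum.elim w z) := by
  let diagram := {φ : L.Formula (α ⊕ M) // φ.IsQF ∧ φ.Realize (Sum.elim v id)}
  let solutions (φ : diagram) : Set (M → N) := {z | φ.1.Realize (Sum.elim w z)}
  have solutions_nonempty (φ : diagram) : (solutions φ).Nonempty := h.exists_realize φ.2.1 φ.2.2
  have directed : Directed (· ≥ ·) fun φ ↦ 𝓟 (solutions φ) := fun φ ψ ↦
    ⟨⟨φ.1 ⊓ ψ.1, φ.2.1.inf ψ.2.1, Formula.realize_inf.2 ⟨φ.2.2, ψ.2.2⟩⟩,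
      principal_mono.2 fun _ hz ↦ (Formula.realize_inf.1 hz).1,
      principal_mono.2 fun _ hz ↦ (Formula.realize_inf.1 hz).2⟩
  have : NeBot (⨅ φ, 𝓟 (solutions φ)) := iInf_neBot_of_directed directed fun φ ↦
    principal_neBot_iff.2 (solutions_nonempty φ)
  exact ⟨.of (⨅ φ, 𝓟 (solutions φ)), fun φ hφ hv ↦ Ultrafilter.of_le _ <|
    mem_iInf_of_mem (⟨φ, hφ, hv⟩ : diagram) <| mem_principal_self _⟩

end ExistentialTransfer

end Language

section Germ

open Polynomial

variable {ι R S : Type*} [CommRing R] [CommRing S] {l : Filter ι} {U : Ultrafilter ι}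

/-- An injective ring homomorphism as an embedding of first-order structures. -/
def ringEmbedding (f : R →+* S) (hf : Function.Injective f) : R ↪[Language.ring] S where
  toFun := f
  inj' := hf
  map_fun' g x := by cases g <;> simp
  map_rel' r := isEmptyElim r

/-- The ring of germs along an ultrafilter is the model-theoretic ultrapower, to which Łoś's theorem
applies; the two differ only in how their operations are defined. -/
def germEquivProduct (U : Ultrafilter ι) (R : Type*) [CommRing R] :
    Germ (U : Filter ι) R ≃[Language.ring] (U : Filter ι).Product fun _ ↦ R where
  toEquiv := Equiv.refl _
  map_fun' f x := by
    obtain ⟨y, rfl⟩ : ∃ y : _ → ι → R, x = fun i ↦ (y i : Germ (U : Filter ι) R) :=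
      ⟨fun i ↦ (x i).out, funext fun i ↦ (Quotient.out_eq' _).symm⟩
    refine Eq.trans ?_ (Ultraproduct.funMap_cast f y).symm
    cases f <;> rfl
  map_rel' r := isEmptyElim r

theorem realize_const_germ {α : Type*} (φ : Language.ring.Formula α) (v : α → R) :
    φ.Realize (fun a ↦ (Germ.const (v a) : Germ (U : Filter ι) R)) ↔ φ.Realize v := by
  rw [← StrongHomClass.realize_formula (germEquivProduct U R)]
  exact (Ultraproduct.realize_formula_cast φ fun a _ ↦ v a).trans eventually_const

/-- The ring homomorphism between rings of germs given by postcomposition with `f`. -/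
def germMap (l : Filter ι) (f : R →+* S) : Germ l R →+* Germ l S where
  toFun := Germ.map f
  map_zero' := congrArg (Germ.const (l := l)) (map_zero f)
  map_one' := congrArg (Germ.const (l := l)) (map_one f)
  map_add' x y := Germ.inductionOn₂ x y fun _ _ ↦ congrArg _ (funext fun _ ↦ map_add f _ _)
  map_mul' x y := Germ.inductionOn₂ x y fun _ _ ↦ congrArg _ (funext fun _ ↦ map_mul f _ _)

@[simp]
theorem germMap_const (f : R →+* S) (a : R) : germMap l f (Germ.const a) = Germ.const (f a) :=
  rfl

theorem germMap_germMap {T : Type*} [CommRing T] (g : S →+* T) (f : R →+* S) (x : Germ l R) :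
    germMap l g (germMap l f x) = germMap l (g.comp f) x :=
  Germ.inductionOn x fun _ ↦ rfl

theorem germMap_injective {f : R →+* S} (hf : Function.Injective f) :
    Function.Injective (germMap l f) := fun x y ↦ by
  refine Germ.inductionOn₂ x y fun x y hxy ↦ Germ.coe_eq.2 ?_
  filter_upwards [Germ.coe_eq.1 hxy] with i hi using hf hi

/-- A polynomial whose coefficients are germs, as the germ of a family of polynomials. -/
noncomputable def polynomialToGerm (l : Filter ι) (R : Type*) [CommRing R] :
    (Germ l R)[X] →+* Germ l R[X] :=
  eval₂RingHom (germMap l C) (Germ.const X)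

theorem map_coeff_polynomialToGerm (p : (Germ l R)[X]) (n : ℕ) :
    (polynomialToGerm l R p).map (fun q ↦ q.coeff n) = p.coeff n := by
  induction p using Polynomial.induction_on' with
  | add p q hp hq =>
    rw [map_add, coeff_add, ← hp, ← hq]
    exact Germ.inductionOn₂ (polynomialToGerm l R p) (polynomialToGerm l R q) fun _ _ ↦
      congrArg Germ.ofFun (funext fun _ ↦ coeff_add _ _ _)
  | monomial k a =>
    rw [polynomialToGerm, coe_eval₂RingHom, eval₂_monomial, coeff_monomial]
    induction a using Germ.inductionOn with | h a =>
    refine (congrArg Germ.ofFun (funext fun i ↦ coeff_C_mul_X_pow (a i) k n)).trans ?_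
    simp only [eq_comm (a := k)]
    split_ifs <;> rfl

theorem polynomialToGerm_injective : Function.Injective (polynomialToGerm l R) := fun p q h ↦ by
  ext n
  rw [← map_coeff_polynomialToGerm, h, map_coeff_polynomialToGerm]

theorem exists_germ_extension_ratFunc [IsDomain R] [IsDomain S] {f : R →+* Germ (U : Filter ι) S}
    (hf : Function.Injective f) :
    ∃ g : RatFunc R →+* Germ (U : Filter ι) (RatFunc S),
      g RatFunc.X = Germ.const RatFunc.X ∧
      ∀ a, g (RatFunc.C a) = germMap (U : Filter ι) RatFunc.C (f a) := by
  let toRatFunc := germMap (U : Filter ι) (algebraMap S[X] (RatFunc S))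
  let ψ : R[X] →+* Germ (U : Filter ι) (RatFunc S) :=
    (toRatFunc.comp (polynomialToGerm (U : Filter ι) S)).comp (mapRingHom f)
  have ψ_injective : Function.Injective ψ :=
    ((germMap_injective (RatFunc.algebraMap_injective S)).comp polynomialToGerm_injective).comp
      (map_injective f hf)
  have ψ_X : ψ X = Germ.const RatFunc.X := by
    simp [ψ, toRatFunc, polynomialToGerm]
  have ψ_C (a : R) : ψ (C a) = germMap (U : Filter ι) RatFunc.C (f a) := by
    simp [ψ, toRatFunc, polynomialToGerm, germMap_germMap]
  have hψ := nonZeroDivisors_le_comap_nonZeroDivisors_of_injective ψ ψ_injective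
  exact ⟨RatFunc.liftRingHom ψ hψ, (RatFunc.liftRingHom_X ψ hψ).trans ψ_X,
    fun a ↦ (RatFunc.liftRingHom_C ψ hψ a).trans (ψ_C a)⟩

end Germ

namespace ExistentialTransfer

variable {α R S : Type*} [CommRing R] [CommRing S] {v : α → R} {w : α → S}

theorem of_germ_ringHom {ι : Type*} {U : Ultrafilter ι} {f : R →+* Germ (U : Filter ι) S}
    (hf : Function.Injective f) (hvw : ∀ a, f (v a) = Germ.const (w a)) :
    ExistentialTransfer Language.ring v w := fun s φ hφ hv ↦ by
  have realize_germ : φ.exs.Realize (f ∘ v) :=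
    realize_exs_comp_embedding (ringEmbedding f hf) hφ hv
  rw [show f ∘ v = fun a ↦ Germ.const (w a) from funext hvw] at realize_germ
  exact (realize_const_germ φ.exs w).1 realize_germ

theorem exists_germ_ringHom (h : ExistentialTransfer Language.ring v w) :
    ∃ (U : Ultrafilter (R → S)) (f : R →+* Germ (U : Filter (R → S)) S),
      Function.Injective f ∧ ∀ a, f (v a) = Germ.const (w a) := by
  obtain ⟨U, hU⟩ := h.exists_ultrafilter
  have isQF_equal (t₁ t₂ : Language.ring.Term (α ⊕ R)) : (t₁.equal t₂).IsQF :=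
    (BoundedFormula.IsAtomic.equal _ _).isQF
  have eventually_eq {t₁ t₂ : Language.ring.Term (α ⊕ R)}
      (ht : t₁.realize (Sum.elim v id) = t₂.realize (Sum.elim v id)) :
      (fun z : R → S ↦ t₁.realize (Sum.elim w z)) =ᶠ[U] fun z ↦ t₂.realize (Sum.elim w z) := by
    simpa using! hU _ (isQF_equal t₁ t₂) (by simpa using ht)
  let x (a : R) : Language.ring.Term (α ⊕ R) := Term.var (.inr a)
  let f : R →+* Germ (U : Filter (R → S)) S :=
    { toFun a := ((fun z ↦ z a : (R → S) → S) : Germ (U : Filter (R → S)) S)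
      map_zero' := Germ.coe_eq.2 <| by simpa [x] using! eventually_eq (t₁ := x 0) (t₂ := 0)
      map_one' := Germ.coe_eq.2 <| by simpa [x] using! eventually_eq (t₁ := x 1) (t₂ := 1)
      map_add' a b := Germ.coe_eq.2 <| by
        simpa [x] using! eventually_eq (t₁ := x (a + b)) (t₂ := x a + x b)
      map_mul' a b := Germ.coe_eq.2 <| by
        simpa [x] using! eventually_eq (t₁ := x (a * b)) (t₂ := x a * x b) }
  have f_injective : Function.Injective f := fun a b hab ↦ by
    by_contra hne
    have eventually_ne : ∀ᶠ z : R → S in U, z a ≠ z b := by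
      simpa [x] using hU _ (isQF_equal (x a) (x b)).not (by simpa [x] using hne)
    obtain ⟨z, z_eq, z_ne⟩ := ((Germ.coe_eq.1 hab).and eventually_ne).exists
    exact z_ne z_eq
  exact ⟨U, f, f_injective, fun a ↦ Germ.coe_eq.2 <| by
    simpa [x] using! eventually_eq (t₁ := x (v a)) (t₂ := Term.var (.inl a))⟩

section RatFunc

variable [IsDomain R] [IsDomain S]

theorem exists_ratFunc_germ_ringHom (h : ExistentialTransfer Language.ring v w) :
    ∃ (U : Ultrafilter (R → S)) (g : RatFunc R →+* Germ (U : Filter (R → S)) (RatFunc S)),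
      g RatFunc.X = Germ.const RatFunc.X ∧
      ∀ a, g (RatFunc.C (v a)) = Germ.const (RatFunc.C (w a)) := by
  obtain ⟨U, f, f_injective, f_v⟩ := h.exists_germ_ringHom
  obtain ⟨g, g_X, g_C⟩ := exists_germ_extension_ratFunc f_injective
  exact ⟨U, g, g_X, fun a ↦ by rw [g_C, f_v, germMap_const]⟩

theorem ratFunc_X (h : ExistentialTransfer Language.ring v w) :
    ExistentialTransfer Language.ring
      (fun _ : Unit ↦ (RatFunc.X : RatFunc R)) (fun _ ↦ (RatFunc.X : RatFunc S)) := by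
  obtain ⟨_, g, g_X, -⟩ := h.exists_ratFunc_germ_ringHom
  exact of_germ_ringHom g.injective fun _ ↦ g_X

theorem ratFunc_algebraMap {R₀ : Type*} [CommRing R₀] [IsDomain R₀] [Algebra R₀ R] [Algebra R₀ S]
    (h : ExistentialTransfer Language.ring (algebraMap R₀ R) (algebraMap R₀ S))
    {eR : RatFunc R₀ →+* RatFunc R} {eS : RatFunc R₀ →+* RatFunc S}
    (eR_X : eR RatFunc.X = RatFunc.X) (eS_X : eS RatFunc.X = RatFunc.X)
    (eR_C : ∀ c, eR (RatFunc.C c) = RatFunc.C (algebraMap R₀ R c))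
    (eS_C : ∀ c, eS (RatFunc.C c) = RatFunc.C (algebraMap R₀ S c))
    {β : Type*} (r : β → RatFunc R₀) :
    ExistentialTransfer Language.ring (eR ∘ r) (eS ∘ r) := by
  obtain ⟨U, g, g_X, g_C⟩ := h.exists_ratFunc_germ_ringHom
  let diag : RatFunc S →+* Germ (U : Filter (R → S)) (RatFunc S) :=
    (Germ.coeRingHom _).comp (Pi.constRingHom _ _)
  have g_comp_eR : g.comp eR = diag.comp eS := by
    refine IsLocalization.ringHom_ext (nonZeroDivisors (Polynomial R₀))
      (Polynomial.ringHom_ext (fun c ↦ ?_) ?_)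
    · simp only [RingHom.comp_apply, RatFunc.algebraMap_C, eR_C, eS_C, g_C]
      rfl
    · simp only [RingHom.comp_apply, RatFunc.algebraMap_X, eR_X, eS_X, g_X]
      rfl
  exact of_germ_ringHom g.injective fun b ↦ RingHom.congr_fun g_comp_eR (r b)

end RatFunc

end ExistentialTransfer

theorem stmt9_general {R₀ R S : Type*} [CommRing R₀] [CommRing R] [CommRing S]
    [IsDomain R₀] [IsDomain R] [IsDomain S] [Algebra R₀ R] [Algebra R₀ S] :
    ((∀ (m : ℕ) (c : Fin m → R₀),
        ExistentialTransfer Language.ring (algebraMap R₀ R ∘ c) (algebraMap R₀ S ∘ c)) →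
      ∀ (eR : RatFunc R₀ →+* RatFunc R) (eS : RatFunc R₀ →+* RatFunc S),
        eR RatFunc.X = RatFunc.X → eS RatFunc.X = RatFunc.X →
        (∀ c, eR (RatFunc.C c) = RatFunc.C (algebraMap R₀ R c)) →
        (∀ c, eS (RatFunc.C c) = RatFunc.C (algebraMap R₀ S c)) →
        ∀ (m : ℕ) (r : Fin m → RatFunc R₀),
          ExistentialTransfer Language.ring (eR ∘ r) (eS ∘ r)) ∧
    (ExistentialTransfer Language.ring (default : Empty → R) (default : Empty → S) →
      ExistentialTransfer Language.ring
        (fun _ : Unit ↦ (RatFunc.X : RatFunc R)) (fun _ ↦ (RatFunc.X : RatFunc S))) :=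
  ⟨fun h _ _ eR_X eS_X eR_C eS_C _ r ↦
    (ExistentialTransfer.of_fin h).ratFunc_algebraMap eR_X eS_X eR_C eS_C r,
    ExistentialTransfer.ratFunc_X⟩

/-- let `k, l` be field extensions of `k₀`.  (Main part) If every existential ring
sentence with parameters from `k₀` true in `k` is true in `l`, then every existential ring
sentence with parameters from `k₀(t)` true in `k(t)` is true in `l(t)`, where `k₀(t)` is mapped
into `k(t)` and `l(t)` by the embeddings sending `t ↦ t` and acting as `algebraMap` on constants.
(In particular) If every existential ring sentence true in `k` is true in `l`, then for every
existential ring formula `φ(w)`: `k(t) ⊨ φ(t)` implies `l(t) ⊨ φ(t)`. -/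
theorem stmt9 (k₀ k l : Type) [Field k₀] [Field k] [Field l]
    [Algebra k₀ k] [Algebra k₀ l] :
    ((∀ (m s : ℕ) (φ : Language.ring.BoundedFormula (Fin m) s), φ.IsQF →
        ∀ c : Fin m → k₀,
          (φ.exs : Language.ring.Formula _).Realize (fun i => algebraMap k₀ k (c i)) →
          (φ.exs : Language.ring.Formula _).Realize (fun i => algebraMap k₀ l (c i))) →
      ∀ (ek : RatFunc k₀ →+* RatFunc k) (el : RatFunc k₀ →+* RatFunc l),
        ek RatFunc.X = RatFunc.X → el RatFunc.X = RatFunc.X →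
        (∀ c : k₀, ek (RatFunc.C c) = RatFunc.C (algebraMap k₀ k c)) →
        (∀ c : k₀, el (RatFunc.C c) = RatFunc.C (algebraMap k₀ l c)) →
        ∀ (m s : ℕ) (φ : Language.ring.BoundedFormula (Fin m) s), φ.IsQF →
          ∀ r : Fin m → RatFunc k₀,
            (φ.exs : Language.ring.Formula _).Realize (fun i => ek (r i)) →
            (φ.exs : Language.ring.Formula _).Realize (fun i => el (r i))) ∧
    ((∀ (s : ℕ) (φ : Language.ring.BoundedFormula Empty s), φ.IsQF →
        k ⊨ (φ.exs : Language.ring.Sentence) → l ⊨ (φ.exs : Language.ring.Sentence)) →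
      ∀ (s : ℕ) (φ : Language.ring.BoundedFormula Unit s), φ.IsQF →
        (φ.exs : Language.ring.Formula _).Realize (fun _ : Unit => (RatFunc.X : RatFunc k)) →
        (φ.exs : Language.ring.Formula _).Realize (fun _ : Unit => (RatFunc.X : RatFunc l))) :=
  ⟨fun h ek el ekX elX ekC elC m s φ hφ r ↦ (stmt9_general (R₀ := k₀)).1
    (fun m c s φ hφ ↦ h m s φ hφ c) ek el ekX elX ekC elC m r s φ hφ, (stmt9_general (R₀ := k₀)).2⟩
end
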